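/- Let 𝒜 be an S-ring over a finite abelian group G. Then every automorphism of G lying in the center of Aut(G) is a Cayley isomorphism from 𝒜 onto itself; that is, Z(Aut(G)) ≤ Iso_cay(𝒜). -/

import Mathlib

open scoped Pointwise

/-- The element `\underline{X} = Σ_{x∈X} x` of the integral group ring `ℤG`. -/
noncomputable def grpSum {G : Type*} [Group G] [Fintype G] (X : Set G) :
    MonoidAlgebra ℤ G :=
  ∑ x : G, X.indicator (fun g => MonoidAlgebra.single g (1 : ℤ)) x

/-- A Schur ring (S-ring) over a finite group `G`, described by its partition
into basic sets: (S1) `{1}` is a basic set, (S2) the class of basic sets is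
closed under inverses, (S3) the ℤ-span of the sums `\underline{X}` is closed
under multiplication (i.e. is a subring of `ℤG`). -/
structure SchurRing (G : Type*) [Group G] [Fintype G] where
  basicSets : Set (Set G)
  nonempty_mem : ∀ X ∈ basicSets, X.Nonempty
  cover : ∀ g : G, ∃ X ∈ basicSets, g ∈ X
  disjoint' : ∀ X ∈ basicSets, ∀ Y ∈ basicSets, X ≠ Y → X ∩ Y = ∅
  one_mem : {(1 : G)} ∈ basicSets
  inv_mem : ∀ X ∈ basicSets, X⁻¹ ∈ basicSets
  mul_mem : ∀ X ∈ basicSets, ∀ Y ∈ basicSets,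
    grpSum X * grpSum Y ∈ Submodule.span ℤ (grpSum '' basicSets)

namespace SchurRing

variable {G : Type*} [Group G] [Fintype G]

/-- An `𝒜`-set: a union of basic sets. -/
def IsASet (A : SchurRing G) (S : Set G) : Prop :=
  ∃ T ⊆ A.basicSets, S = ⋃₀ T

/-- An `𝒜`-subgroup: a subgroup that is an `𝒜`-set. -/
def IsASubgroup (A : SchurRing G) (H : Subgroup G) : Prop :=
  A.IsASet (H : Set G)

/-- `𝒜` is schurian: its basic sets are the orbits of the stabilizer of `1`
in some group `K` with `G_right ≤ K ≤ Sym(G)`. -/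
def IsSchurian (A : SchurRing G) : Prop :=
  ∃ K : Subgroup (Equiv.Perm G), (∀ g : G, Equiv.mulRight g ∈ K) ∧
    A.basicSets = Set.range fun x : G =>
      MulAction.orbit (MulAction.stabilizer K (1 : G)) x

/-- `𝒜` is cyclotomic: its basic sets are the orbits of a subgroup of `Aut(G)`. -/
def IsCyclotomic (A : SchurRing G) : Prop :=
  ∃ M : Subgroup (MulAut G),
    A.basicSets = Set.range fun x : G => MulAction.orbit M x

/-- `𝒜` is trivial: its basic sets are `{1}` and `G ∖ {1}`. -/
def IsTrivial (A : SchurRing G) : Prop :=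
  A.basicSets ⊆ {{(1 : G)}, {(1 : G)}ᶜ}

/-- `𝒜 = 𝒜_H ⊗ 𝒜_K`: an internal tensor product decomposition of `𝒜`
with respect to the internal direct product `G = H × K`. -/
def IsTensorDecomp (A : SchurRing G) (H K : Subgroup G) : Prop :=
  A.IsASubgroup H ∧ A.IsASubgroup K ∧ H ⊓ K = ⊥ ∧ H ⊔ K = ⊤ ∧
  ∀ X ∈ A.basicSets, ∃ X₁ ∈ A.basicSets, ∃ X₂ ∈ A.basicSets,
    X₁ ⊆ (H : Set G) ∧ X₂ ⊆ (K : Set G) ∧ X = X₁ * X₂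

/-- `𝒜` is the `U/L`-wreath product: `U`, `L` are `𝒜`-subgroups, `L ⊴ G`,
`L ≤ U`, and `L ≤ rad(X)` for every basic set `X` outside `U`. -/
def IsWreathSection (A : SchurRing G) (U L : Subgroup G) : Prop :=
  A.IsASubgroup U ∧ A.IsASubgroup L ∧ L ≤ U ∧ L.Normal ∧
  ∀ X ∈ A.basicSets, ¬ X ⊆ (U : Set G) →
    ∀ g ∈ L, (g * ·) '' X = X ∧ (· * g) '' X = X

end SchurRing

/-- A finite group is a Schur group if every S-ring over it is schurian. -/
def IsSchurGroup (G : Type*) [Group G] [Fintype G] : Prop :=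
  ∀ A : SchurRing G, A.IsSchurian

/-- A Cayley isomorphism between S-rings: a group isomorphism mapping the
basic sets of `𝒜` onto the basic sets of `𝒜'`. -/
def IsCayleyIso {G G' : Type*} [Group G] [Fintype G] [Group G'] [Fintype G']
    (A : SchurRing G) (A' : SchurRing G') (f : G ≃* G') : Prop :=
  (fun X : Set G => ⇑f '' X) '' A.basicSets = A'.basicSets

/-!
A central automorphism `σ` commutes with every endomorphism `φ` of square zero, because
`x ↦ x * φ x` is an automorphism. Let `a` have maximal order. Then `⟨a⟩` is a retract of `G`, with
kernel `K` say. Commuting `σ` with the characters `G → ⟨a⟩` that are trivial on `a` gives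
`σ a = a ^ m` for some `m`, and commuting it with the endomorphisms that kill `K` and send `a` into
`K` gives `σ x = x ^ m` on `K`. Hence `σ` is the `m`-th power map, and `m` is coprime to `|G|`.

It remains to prove Schur's theorem on multipliers: such a power map permutes the basic sets. One
may take `m = p` prime. For `X` basic, `\underline{X} ^ p` lies in `𝒜`, so its coefficients are
constant on basic sets; modulo `p` it is `∑ x ∈ X, x ^ p`, so the image of `X` is a union of basic
sets. The same argument for `σ⁻¹` shows that this union is a single basic set.
-/

section CentralAutomorphisms

variable {G : Type*} [CommGroup G]

/-- The transvection `x ↦ x * φ x` along an endomorphism `φ` of square zero. Commuting with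
these automorphisms already forces an automorphism of a finite abelian group to be a power map. -/
def squareZeroTransvection (φ : G →* G) (hφ : ∀ x, φ (φ x) = 1) : MulAut G where
  toFun x := x * φ x
  invFun x := x * (φ x)⁻¹
  left_inv x := by simp [hφ]
  right_inv x := by simp [hφ]
  map_mul' x y := by simp [mul_mul_mul_comm]

theorem apply_comm_of_mem_center {σ : MulAut G} (hσ : σ ∈ Subgroup.center (MulAut G))
    {φ : G →* G} (hφ : ∀ x, φ (φ x) = 1) (x : G) : σ (φ x) = φ (σ x) := by
  have hcomm : squareZeroTransvection φ hφ * σ = σ * squareZeroTransvection φ hφ :=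
    Subgroup.mem_center_iff.mp hσ _
  simpa [squareZeroTransvection] using (DFunLike.congr_fun hcomm x).symm

theorem hasEnoughRootsOfUnity_card (C : Type*) [CommGroup C] [IsCyclic C] :
    HasEnoughRootsOfUnity C (Nat.card C) where
  prim := by
    obtain ⟨g, hg⟩ := IsCyclic.exists_ofOrder_eq_natCard (α := C)
    exact ⟨g, hg ▸ IsPrimitiveRoot.orderOf g⟩
  cyc := by
    have : IsCyclic Cˣ := isCyclic_of_surjective toUnits toUnits.surjective
    infer_instance

theorem exists_retraction_of_card_eq_exponent [Finite G] {C : Subgroup G} [IsCyclic C]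
    (hC : Nat.card C = Monoid.exponent G) : ∃ r : G →* C, ∀ c : C, r c = c := by
  have : HasEnoughRootsOfUnity C (Monoid.exponent G) := hC ▸ hasEnoughRootsOfUnity_card C
  obtain ⟨φ, hφ⟩ := MonoidHom.domRestrict_surjective C C (toUnits (G := C)).toMonoidHom
  refine ⟨(toUnits (G := C)).symm.toMonoidHom.comp φ, fun c => ?_⟩
  have hφc : φ c = toUnits c := DFunLike.congr_fun hφ c
  simp [hφc]

theorem apply_mem_of_mem_center_of_card_eq_exponent [Finite G] {σ : MulAut G}
    (hσ : σ ∈ Subgroup.center (MulAut G)) {C : Subgroup G} [IsCyclic C]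
    (hC : Nat.card C = Monoid.exponent G) {c : G} (hc : c ∈ C) : σ c ∈ C := by
  have : HasEnoughRootsOfUnity C (Monoid.exponent G) := hC ▸ hasEnoughRootsOfUnity_card C
  -- Characters with values in `C` separate points of `G ⧸ C`; those trivial on `C` square to zero.
  refine (CommGroup.forall_monoidHom_apply_eq_one_iff C C (σ c)).mp fun φ hφ => ?_
  let ψ : G →* G := C.subtype.comp ((toUnits (G := C)).symm.toMonoidHom.comp φ)
  have hψC : ∀ y ∈ C, ψ y = 1 := fun y hy => by simp [ψ, hφ y hy]
  have hψσ : ψ (σ c) = 1 := by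
    rw [← apply_comm_of_mem_center hσ fun x => hψC _ (SetLike.coe_mem _), hψC c hc, map_one]
  simpa [ψ] using hψσ

theorem apply_eq_pow_of_retraction_eq_one {σ : MulAut G} (hσ : σ ∈ Subgroup.center (MulAut G))
    {a : G} {r : G →* Subgroup.zpowers a} (hr : ∀ c : Subgroup.zpowers a, r c = c) {m : ℕ}
    (hm : σ a = a ^ m) {x : G} (hx : r x = 1) (hord : orderOf x ∣ orderOf a) : σ x = x ^ m := by
  let g : Subgroup.zpowers a := ⟨a, Subgroup.mem_zpowers a⟩
  have hgen : ∀ c, c ∈ Subgroup.zpowers g := fun ⟨_, i, hi⟩ => ⟨i, Subtype.ext hi⟩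
  have hord' : orderOf x ∣ orderOf g := by rwa [Subgroup.orderOf_mk]
  let k : Subgroup.zpowers a →* G := monoidHomOfForallMemZpowers hgen hord'
  have hkg : k g = x := monoidHomOfForallMemZpowers_apply_gen hgen hord'
  have hrk : ∀ c, r (k c) = 1 := by
    intro c
    obtain ⟨i, rfl⟩ := hgen c
    simp [hkg, hx]
  have hra : r a = g := hr g
  calc σ x = σ (k.comp r a) := by simp [hra, hkg]
    _ = k.comp r (σ a) := apply_comm_of_mem_center hσ (fun y => by simp [hrk]) a
    _ = x ^ m := by simp [hm, hra, hkg]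

theorem exists_forall_apply_eq_pow_of_mem_center [Finite G] {σ : MulAut G}
    (hσ : σ ∈ Subgroup.center (MulAut G)) : ∃ m : ℕ, ∀ x, σ x = x ^ m := by
  obtain ⟨a, ha⟩ := Monoid.exists_orderOf_eq_exponent (Monoid.ExponentExists.of_finite (G := G))
  have hcard : Nat.card (Subgroup.zpowers a) = Monoid.exponent G := by rw [Nat.card_zpowers, ha]
  obtain ⟨r, hr⟩ := exists_retraction_of_card_eq_exponent hcard
  obtain ⟨m, hm⟩ : ∃ m : ℕ, a ^ m = σ a := mem_powers_iff_mem_zpowers.mpr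
    (apply_mem_of_mem_center_of_card_eq_exponent hσ hcard (Subgroup.mem_zpowers a))
  have hzpowers : ∀ c : Subgroup.zpowers a, σ c = (c : G) ^ m := by
    rintro ⟨_, i, rfl⟩
    simp only [map_zpow, ← hm, ← zpow_natCast, zpow_comm a]
  have hker : ∀ x, r x = 1 → σ x = x ^ m := fun x hx =>
    apply_eq_pow_of_retraction_eq_one hσ hr hm.symm hx (ha ▸ Monoid.order_dvd_exponent x)
  refine ⟨m, fun x => ?_⟩
  calc σ x = σ (r x) * σ (x / r x) := by rw [← map_mul, mul_div_cancel]
    _ = (r x : G) ^ m * (x / r x) ^ m := by rw [hzpowers, hker _ (by simp [hr])]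
    _ = x ^ m := by rw [← mul_pow, mul_div_cancel]

end CentralAutomorphisms

theorem coprime_card_of_pow_injective {G : Type*} [Group G] [Finite G] {m : ℕ}
    (hm : Function.Injective fun x : G => x ^ m) : (Nat.card G).Coprime m := by
  refine Nat.coprime_of_dvd fun p hp hpG hpm => ?_
  have : Fact p.Prime := ⟨hp⟩
  obtain ⟨x, hx⟩ := exists_prime_orderOf_dvd_card' p hpG
  have hxm : x ^ m = 1 := orderOf_dvd_iff_pow_eq_one.mp (hx ▸ hpm)
  have hx1 : x = 1 := hm (by simpa using hxm)
  exact hp.ne_one (by rw [← hx, hx1, orderOf_one])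

section Frobenius

variable {M : Type*} [CommMonoid M] {p : ℕ}

theorem coeff_pow_expChar {R : Type*} [CommSemiring R] [ExpChar R p]
    (hp : Function.Injective fun x : M => x ^ p) (f : MonoidAlgebra R M) (y : M) :
    (f ^ p).coeff (y ^ p) = f.coeff y ^ p := by
  classical
  have : ExpChar (MonoidAlgebra R M) p :=
    expChar_of_injective_ringHom (f := MonoidAlgebra.singleOneRingHom)
      (MonoidAlgebra.single_right_injective (m := 1)) p
  have hp0 : p ≠ 0 := (expChar_pos R p).ne'
  induction f using MonoidAlgebra.induction_linear with
  | zero => simp [hp0]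
  | add f₁ f₂ h₁ h₂ => simp [add_pow_expChar, h₁, h₂]
  | single x c =>
    have hxy : x ^ p = y ^ p ↔ x = y := hp.eq_iff
    simp [MonoidAlgebra.single_pow, Finsupp.single_apply, hxy, ite_pow, hp0]

theorem intCast_coeff_pow_prime [Fact p.Prime] (hp : Function.Injective fun x : M => x ^ p)
    (f : MonoidAlgebra ℤ M) (y : M) : ((f ^ p).coeff (y ^ p) : ZMod p) = f.coeff y := by
  let red := MonoidAlgebra.mapRingHom M (Int.castRingHom (ZMod p))
  have hred : ∀ (h : MonoidAlgebra ℤ M) (z : M), (red h).coeff z = (h.coeff z : ZMod p) :=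
    fun h z => by simp [red]
  rw [← hred, ← hred, map_pow red, coeff_pow_expChar hp, ZMod.pow_card]

end Frobenius

section grpSum

variable {G : Type*} [Group G] [Fintype G]

theorem coeff_grpSum (X : Set G) (g : G) : (grpSum X).coeff g = X.indicator 1 g := by
  classical
  simp [grpSum, Set.indicator_apply, MonoidAlgebra.coeff_sum, Finsupp.single_apply, apply_ite,
    Finset.sum_ite]

theorem grpSum_singleton_one : grpSum {(1 : G)} = 1 := by
  classical
  simp [grpSum, Set.indicator_apply, MonoidAlgebra.one_def]

end grpSum

namespace SchurRing

section Group

variable {G : Type*} [Group G] [Fintype G] (A : SchurRing G)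

/-- The S-ring `𝒜` itself, as a subring of `ℤG`. -/
noncomputable def toSubalgebra : Subalgebra ℤ (MonoidAlgebra ℤ G) :=
  (Submodule.span ℤ (grpSum '' A.basicSets)).toSubalgebra
    (Submodule.subset_span ⟨{1}, A.one_mem, grpSum_singleton_one⟩) <| by
      suffices h : Submodule.span ℤ (grpSum '' A.basicSets) *
          Submodule.span ℤ (grpSum '' A.basicSets) ≤ Submodule.span ℤ (grpSum '' A.basicSets) from
        fun f₁ f₂ h₁ h₂ => h (Submodule.mul_mem_mul h₁ h₂)
      rw [Submodule.span_mul_span, Submodule.span_le]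
      rintro _ ⟨_, ⟨X, hX, rfl⟩, _, ⟨Y, hY, rfl⟩, rfl⟩
      exact A.mul_mem X hX Y hY

variable {A}

theorem grpSum_mem_toSubalgebra {X : Set G} (hX : X ∈ A.basicSets) :
    grpSum X ∈ A.toSubalgebra :=
  Submodule.subset_span ⟨X, hX, rfl⟩

theorem eq_of_mem_of_mem {X Y : Set G} (hX : X ∈ A.basicSets) (hY : Y ∈ A.basicSets) {g : G}
    (hgX : g ∈ X) (hgY : g ∈ Y) : X = Y := by
  by_contra h
  exact (A.disjoint' X hX Y hY h).subset ⟨hgX, hgY⟩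

theorem coeff_eq_of_mem_toSubalgebra {f : MonoidAlgebra ℤ G} (hf : f ∈ A.toSubalgebra)
    {Y : Set G} (hY : Y ∈ A.basicSets) {g h : G} (hg : g ∈ Y) (hh : h ∈ Y) :
    f.coeff g = f.coeff h := by
  induction hf using Submodule.span_induction with
  | mem f hf =>
    obtain ⟨X, hX, rfl⟩ := hf
    have hiff : g ∈ X ↔ h ∈ X :=
      ⟨fun hgX => eq_of_mem_of_mem hY hX hg hgX ▸ hh, fun hhX => eq_of_mem_of_mem hY hX hh hhX ▸ hg⟩
    classical
    simp [coeff_grpSum, Set.indicator_apply, hiff]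
  | zero => rfl
  | add f₁ f₂ _ _ h₁ h₂ => simp [h₁, h₂]
  | smul c f _ h => simp only [MonoidAlgebra.coeff_smul_apply, h]

theorem isASet_of_mem {X : Set G} (hX : X ∈ A.basicSets) : A.IsASet X :=
  ⟨{X}, Set.singleton_subset_iff.mpr hX, Set.sUnion_singleton X |>.symm⟩

theorem IsASet.subset_of_mem {S Y : Set G} (hS : A.IsASet S) (hY : Y ∈ A.basicSets) {g : G}
    (hgY : g ∈ Y) (hgS : g ∈ S) : Y ⊆ S := by
  obtain ⟨T, hT, rfl⟩ := hS
  obtain ⟨X, hX, hgX⟩ := hgS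
  rw [eq_of_mem_of_mem hY (hT hX) hgY hgX]
  exact Set.subset_sUnion_of_mem hX

theorem isASet_of_forall_subset {S : Set G}
    (h : ∀ Y ∈ A.basicSets, ∀ g ∈ Y, g ∈ S → Y ⊆ S) : A.IsASet S := by
  refine ⟨{Y ∈ A.basicSets | Y ⊆ S}, fun _ hY => hY.1, subset_antisymm (fun g hg => ?_) ?_⟩
  · obtain ⟨Y, hY, hgY⟩ := A.cover g
    exact ⟨Y, ⟨hY, h Y hY g hgY hg⟩, hgY⟩
  · exact Set.sUnion_subset fun _ hY => hY.2

section CayleyIso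

variable {G' : Type*} [Group G'] [Fintype G'] {A' : SchurRing G'} {f : G ≃* G'}

theorem image_mem_basicSets_of_isASet_image (hf : ∀ S, A.IsASet S → A'.IsASet (f '' S))
    (hf' : ∀ S, A'.IsASet S → A.IsASet (f.symm '' S)) {X : Set G} (hX : X ∈ A.basicSets) :
    f '' X ∈ A'.basicSets := by
  obtain ⟨x, hx⟩ := A.nonempty_mem X hX
  obtain ⟨Y, hY, hxY⟩ := A'.cover (f x)
  have hYX : Y ⊆ f '' X := (hf X (isASet_of_mem hX)).subset_of_mem hY hxY ⟨x, hx, rfl⟩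
  have hXY : X ⊆ f.symm '' Y :=
    (hf' Y (isASet_of_mem hY)).subset_of_mem hX hx ⟨f x, hxY, f.symm_apply_apply x⟩
  have hXY' : f '' X ⊆ Y := by
    rintro _ ⟨z, hz, rfl⟩
    obtain ⟨y, hy, rfl⟩ := hXY hz
    rwa [f.apply_symm_apply]
  rwa [hXY'.antisymm hYX]

theorem isCayleyIso_of_isASet_image (hf : ∀ S, A.IsASet S → A'.IsASet (f '' S))
    (hf' : ∀ S, A'.IsASet S → A.IsASet (f.symm '' S)) : IsCayleyIso A A' f := by
  refine subset_antisymm ?_ fun Y hY => ?_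
  · rintro _ ⟨X, hX, rfl⟩
    exact image_mem_basicSets_of_isASet_image hf hf' hX
  · refine ⟨f.symm '' Y, image_mem_basicSets_of_isASet_image hf' hf hY, ?_⟩
    simp [Set.image_image]

end CayleyIso

end Group

section CommGroup

variable {G : Type*} [CommGroup G] [Fintype G] {A : SchurRing G}

theorem IsASet.image_pow_prime {S : Set G} (hS : A.IsASet S) {p : ℕ} (hp : p.Prime)
    (hpG : (Nat.card G).Coprime p) : A.IsASet ((· ^ p) '' S) := by
  have : Fact p.Prime := ⟨hp⟩
  have hbij : Function.Bijective fun x : G => x ^ p := hpG.pow_left_bijective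
  refine isASet_of_forall_subset fun Y hY _ hxY ⟨x, hxS, hx⟩ h hh => ?_
  subst hx
  obtain ⟨X, hX, hxX⟩ := A.cover x
  obtain ⟨z, rfl⟩ := hbij.surjective h
  have hcoeff : (grpSum X ^ p).coeff (x ^ p) = (grpSum X ^ p).coeff (z ^ p) :=
    coeff_eq_of_mem_toSubalgebra (pow_mem (grpSum_mem_toSubalgebra hX) p) hY hxY hh
  have hzX : z ∈ X := by
    by_contra hz
    have hmod : ((grpSum X).coeff x : ZMod p) = (grpSum X).coeff z := by
      rw [← intCast_coeff_pow_prime hbij.injective, hcoeff,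
        intCast_coeff_pow_prime hbij.injective]
    simp [coeff_grpSum, hxX, hz] at hmod
  exact ⟨z, hS.subset_of_mem hX hxX hxS hzX, rfl⟩

theorem IsASet.image_pow {S : Set G} (hS : A.IsASet S) {m : ℕ} (hm : (Nat.card G).Coprime m) :
    A.IsASet ((· ^ m) '' S) := by
  induction m using induction_on_primes generalizing S with
  | zero =>
    have : Subsingleton G := (Nat.card_eq_one_iff_unique.mp (by simpa using hm)).1
    have hid : (fun x : G => x ^ 0) = id := Subsingleton.elim _ _
    rwa [hid, Set.image_id]
  | one => simpa using hS
  | prime_mul p a hp ih =>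
    have := ih (hS.image_pow_prime hp hm.coprime_mul_right_right) hm.coprime_mul_left_right
    simpa [Set.image_image, ← pow_mul] using this

theorem IsASet.image_of_mem_center {S : Set G} (hS : A.IsASet S) {σ : MulAut G}
    (hσ : σ ∈ Subgroup.center (MulAut G)) : A.IsASet (σ '' S) := by
  obtain ⟨m, hm⟩ := exists_forall_apply_eq_pow_of_mem_center hσ
  have hσm : ⇑σ = (· ^ m) := funext hm
  rw [hσm]
  exact hS.image_pow (coprime_card_of_pow_injective (hσm ▸ σ.injective))

end CommGroup

end SchurRing

theorem center_aut_le_isoCay {G : Type*} [CommGroup G] [Fintype G]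
    (A : SchurRing G) (σ : MulAut G) (hσ : σ ∈ Subgroup.center (MulAut G)) :
    IsCayleyIso A A (σ : G ≃* G) :=
  SchurRing.isCayleyIso_of_isASet_image
    (fun _ hS => hS.image_of_mem_center hσ)
    (fun _ hS => hS.image_of_mem_center (inv_mem hσ))
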